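/- There exist a minor-preserving map from Pol({0,1,2}; C_3, R^⇒_2) to Pol({0,1,2}; C_3, R^=_2) and a minor-preserving map from Pol({0,1,2}; C_3, R^=_2) to Pol({0,1,2}; C_3, R^⇒_2); i.e., these two polymorphism clones are minor equivalent. -/

import Mathlib

/-- The three-element domain `{0,1,2}`. -/
abbrev D3 : Type := Fin 3

/-- `n`-ary operations on `{0,1,2}`. -/
abbrev Op (n : ℕ) : Type := (Fin n → D3) → D3

/-- An `n`-ary operation `f` preserves a `k`-ary relation `R`. -/
def Preserves {n k : ℕ} (f : Op n) (R : Set (Fin k → D3)) : Prop :=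
  ∀ t : Fin n → (Fin k → D3), (∀ i, t i ∈ R) → (fun j => f fun i => t i j) ∈ R

/-- `C₃ = {(0,1),(1,2),(2,0)}`. -/
def C3rel : Set (Fin 2 → D3) :=
  { t | (t 0 = 0 ∧ t 1 = 1) ∨ (t 0 = 1 ∧ t 1 = 2) ∨ (t 0 = 2 ∧ t 1 = 0) }

/-- `R⁼₂ = {(x,y,z) : x ∈ {0,1} ∧ (x = 0 → y = z ∈ {0,1})}`. -/
def Req2rel : Set (Fin 3 → D3) :=
  { t | (t 0 = 0 ∨ t 0 = 1) ∧ (t 0 = 0 → t 1 = t 2 ∧ (t 1 = 0 ∨ t 1 = 1)) }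

/-- `R⇒₂ = {(x,y,z) : x,y ∈ {0,1} ∧ (x = y = 0 → z = 0)}`. -/
def Rimp2rel : Set (Fin 3 → D3) :=
  { t | (t 0 = 0 ∨ t 0 = 1) ∧ (t 1 = 0 ∨ t 1 = 1) ∧ (t 0 = 0 → t 1 = 0 → t 2 = 0) }

/-- The polymorphism clone of a family of relations on `{0,1,2}`. -/
def Pol (A : Set (Σ k : ℕ, Set (Fin k → D3))) : ∀ n, Set (Op n) :=
  fun n => { f | ∀ R ∈ A, Preserves f R.2 }

/-- The minor `f_π` of an `n`-ary operation `f` along `π`. -/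
def minor {n r : ℕ} (f : Op n) (π : Fin n → Fin r) : Op r :=
  fun x => f fun i => x (π i)

/-- `ξ` is a minor-preserving map from `C` to `D`: it preserves arities,
maps `C` into `D`, and commutes with taking minors. -/
def IsMinorHom (C D : ∀ n, Set (Op n)) (ξ : ∀ n, Op n → Op n) : Prop :=
  (∀ n, ∀ f ∈ C n, ξ n f ∈ D n) ∧
  (∀ (n r : ℕ) (f : Op n) (π : Fin n → Fin r), f ∈ C n → ξ r (minor f π) = minor (ξ n f) π)

/-!
Let `f` preserve `C₃` and `R⇒₂`. Preserving `R⇒₂` makes the sets `x⁻¹(0)`, for `x` a tuple over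
`{0,1}` with `f x = 0`, closed under intersection and supersets, and the cyclic symmetry expressed
by `C₃` rules out `∅`. So they are the supersets of one nonempty set of coordinates, the zero core
of `f`, and the zero core of a minor `f_π` is the image under `π` of that of `f`. Now let `g y` be
read off from the set `A` of values that `y` takes on the core: the last element of `A` in the
cyclic order `0 → 1 → 2 → 0` if `A ≠ {0,1,2}`, and `f y` otherwise. Then `f ↦ g` is minor-preserving
and `g` preserves `C₃`; it preserves `R⁼₂` because for `A ⊆ {0,1}` the value `0` occurs only if
`A = {0}`.

In the other direction the identity works, since `R⇒₂(x,y,z)` holds if and only if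
`R⁼₂(x,y,u)`, `R⁼₂(u,0,z)` and `y ∈ {0,1}` with `u = x ∨ y`.
-/

section Relations

variable {n : ℕ} {f : Op n}

lemma mem_Pol_pair {R S : Σ k : ℕ, Set (Fin k → D3)} :
    f ∈ Pol {R, S} n ↔ Preserves f R.2 ∧ Preserves f S.2 := by
  simp [Pol]

lemma eq_zero_or_eq_one_iff_le_one {a : D3} : a = 0 ∨ a = 1 ↔ a ≤ 1 := by
  revert a; decide

lemma mem_C3rel_iff {t : Fin 2 → D3} : t ∈ C3rel ↔ t 1 = t 0 + 1 := by
  simp only [C3rel, Set.mem_ofPred_eq]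
  generalize t 0 = a, t 1 = b
  revert a b; decide

lemma mem_Req2rel_iff {t : Fin 3 → D3} :
    t ∈ Req2rel ↔ t 0 ≤ 1 ∧ (t 0 = 0 → t 1 = t 2 ∧ t 1 ≤ 1) := by
  simp only [Req2rel, Set.mem_ofPred_eq, eq_zero_or_eq_one_iff_le_one]

lemma mem_Rimp2rel_iff {t : Fin 3 → D3} :
    t ∈ Rimp2rel ↔ t 0 ≤ 1 ∧ t 1 ≤ 1 ∧ (t 0 = 0 → t 1 = 0 → t 2 = 0) := by
  simp only [Rimp2rel, Set.mem_ofPred_eq, eq_zero_or_eq_one_iff_le_one]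

lemma preserves_C3rel_iff : Preserves f C3rel ↔ ∀ y, f (y + 1) = f y + 1 := by
  constructor
  · intro h y
    exact mem_C3rel_iff.1 (h (fun i => ![y i, y i + 1]) fun i => mem_C3rel_iff.2 rfl)
  · intro h t ht
    have ht' : (fun i => t i 1) = (fun i => t i 0) + 1 := funext fun i => mem_C3rel_iff.1 (ht i)
    rw [mem_C3rel_iff, ht', h]

lemma preserves_Req2rel_iff :
    Preserves f Req2rel ↔ (∀ x ≤ 1, f x ≤ 1) ∧ ∀ x ≤ 1, f x = 0 →
      ∀ y z, (∀ i, x i = 0 → y i = z i ∧ y i ≤ 1) → f y = f z ∧ f y ≤ 1 := by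
  constructor
  · intro h
    have key (x y z : Fin n → D3) (hx : x ≤ 1) (hyz : ∀ i, x i = 0 → y i = z i ∧ y i ≤ 1) :=
      mem_Req2rel_iff.1 <| h (fun i => ![x i, y i, z i]) fun i => mem_Req2rel_iff.2 ⟨hx i, hyz i⟩
    exact ⟨fun x hx => (key x 0 0 hx fun i _ => ⟨rfl, zero_le_one⟩).1,
      fun x hx hfx y z hyz => (key x y z hx hyz).2 hfx⟩
  · rintro ⟨hbool, heq⟩ t ht
    simp only [mem_Req2rel_iff] at ht ⊢
    have hx : (fun i => t i 0) ≤ 1 := fun i => (ht i).1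
    exact ⟨hbool _ hx, fun h0 => heq _ hx h0 _ _ fun i => (ht i).2⟩

lemma preserves_Rimp2rel_iff :
    Preserves f Rimp2rel ↔ (∀ x ≤ 1, f x ≤ 1) ∧ ∀ x ≤ 1, ∀ y ≤ 1, f x = 0 → f y = 0 →
      ∀ z, (∀ i, x i = 0 → y i = 0 → z i = 0) → f z = 0 := by
  constructor
  · intro h
    have key (x y z : Fin n → D3) (hx : x ≤ 1) (hy : y ≤ 1)
        (hz : ∀ i, x i = 0 → y i = 0 → z i = 0) :=
      mem_Rimp2rel_iff.1 <|
        h (fun i => ![x i, y i, z i]) fun i => mem_Rimp2rel_iff.2 ⟨hx i, hy i, hz i⟩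
    exact ⟨fun x hx => (key x x x hx hx fun _ h _ => h).1,
      fun x hx y hy hfx hfy z hz => (key x y z hx hy hz).2.2 hfx hfy⟩
  · rintro ⟨hbool, himp⟩ t ht
    simp only [mem_Rimp2rel_iff] at ht ⊢
    have hx : (fun i => t i 0) ≤ 1 := fun i => (ht i).1
    have hy : (fun i => t i 1) ≤ 1 := fun i => (ht i).2.1
    exact ⟨hbool _ hx, hbool _ hy,
      fun hfx hfy => himp _ hx _ hy hfx hfy _ fun i => (ht i).2.2⟩

lemma apply_zero_of_preserves_C3rel (hC : Preserves f C3rel) (hbool : ∀ x ≤ 1, f x ≤ 1) :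
    f 0 = 0 := by
  have h0 : f 0 ≤ 1 := hbool 0 zero_le_one
  have h1 : f 0 + 1 ≤ 1 := by
    rw [← preserves_C3rel_iff.1 hC, zero_add]
    exact hbool 1 le_rfl
  generalize f 0 = a at h0 h1
  revert a; decide

lemma preserves_Rimp2rel_of_preserves_Req2rel (hC : Preserves f C3rel) (hE : Preserves f Req2rel) :
    Preserves f Rimp2rel := by
  obtain ⟨hbool, heq⟩ := preserves_Req2rel_iff.1 hE
  refine preserves_Rimp2rel_iff.2 ⟨hbool, fun x hx y hy hfx hfy z hz => ?_⟩
  have hsup : f (x ⊔ y) = 0 := by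
    rw [← hfy]
    exact (heq x hx hfx y (x ⊔ y) fun i hi => ⟨by simp [hi], hy i⟩).1.symm
  have hz0 : f 0 = f z :=
    (heq (x ⊔ y) (sup_le hx hy) hsup 0 z fun i hi =>
      have hi' : x i = 0 ∧ y i = 0 := sup_eq_bot_iff.1 hi
      ⟨(hz i hi'.1 hi'.2).symm, zero_le_one⟩).1
  rw [← hz0, apply_zero_of_preserves_C3rel hC hbool]

end Relations

section ZeroCore

variable {n : ℕ} {f : Op n}

/-- The tuples over `{0,1}` that `f` maps to `0`; being over `{0,1}` is written `x ≤ 1`. -/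
def boolZeros (f : Op n) : Set (Fin n → D3) := {x | x ≤ 1 ∧ f x = 0}

/-- The zero core of `f`: the coordinates at which every tuple over `{0,1}` mapped to `0` by `f`
is itself `0`. If `f` preserves `C₃` and `R⇒₂`, then conversely every tuple that vanishes on the
core is mapped to `0`. -/
def zeroCore (f : Op n) : Set (Fin n) := {i | ∀ x ∈ boolZeros f, x i = 0}

lemma zero_mem_boolZeros (hC : Preserves f C3rel) (hR : Preserves f Rimp2rel) :
    0 ∈ boolZeros f :=
  ⟨zero_le_one, apply_zero_of_preserves_C3rel hC (preserves_Rimp2rel_iff.1 hR).1⟩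

lemma supClosed_boolZeros (hR : Preserves f Rimp2rel) : SupClosed (boolZeros f) := by
  rintro x ⟨hx, hfx⟩ y ⟨hy, hfy⟩
  exact ⟨sup_le hx hy, (preserves_Rimp2rel_iff.1 hR).2 x hx y hy hfx hfy _
    fun i hxi hyi => by simp [hxi, hyi]⟩

lemma exists_isGreatest_boolZeros (hC : Preserves f C3rel) (hR : Preserves f Rimp2rel) :
    ∃ m, IsGreatest (boolZeros f) m :=
  ⟨sSup (boolZeros f),
    (supClosed_boolZeros hR).sSup_mem (Set.toFinite _) (zero_mem_boolZeros hC hR) subset_rfl,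
    fun _ => le_sSup⟩

lemma apply_eq_zero_of_forall_mem_zeroCore (hC : Preserves f C3rel) (hR : Preserves f Rimp2rel)
    {z : Fin n → D3} (hz : ∀ i ∈ zeroCore f, z i = 0) : f z = 0 := by
  obtain ⟨m, ⟨hm, hfm⟩, hmax⟩ := exists_isGreatest_boolZeros hC hR
  refine (preserves_Rimp2rel_iff.1 hR).2 m hm m hm hfm hfm z fun i hi _ => hz i fun x hx => ?_
  exact Fin.le_zero_iff.1 (hi ▸ hmax hx i)

lemma zeroCore_nonempty (hC : Preserves f C3rel) (hR : Preserves f Rimp2rel) :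
    (zeroCore f).Nonempty := by
  rw [Set.nonempty_iff_ne_empty]
  intro hempty
  have hf (z : Fin n → D3) : f z = 0 :=
    apply_eq_zero_of_forall_mem_zeroCore hC hR (by simp [hempty])
  have h01 := preserves_C3rel_iff.1 hC 0
  rw [hf, hf] at h01
  exact absurd h01 (by decide)

lemma zeroCore_minor (hC : Preserves f C3rel) (hR : Preserves f Rimp2rel) {r : ℕ}
    (π : Fin n → Fin r) : zeroCore (minor f π) = π '' zeroCore f := by
  classical
  refine Set.Subset.antisymm (fun j hj => ?_) ?_
  · let x : Fin r → D3 := fun j => if j ∈ π '' zeroCore f then 0 else 1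
    have hx : x ≤ 1 := fun j => by
      simp only [x]
      split_ifs <;> simp
    have hfx : minor f π x = 0 := apply_eq_zero_of_forall_mem_zeroCore hC hR fun i hi =>
      if_pos (Set.mem_image_of_mem π hi)
    by_contra hjc
    exact one_ne_zero ((if_neg hjc).symm.trans (hj x ⟨hx, hfx⟩))
  · rintro _ ⟨i, hi, rfl⟩ x ⟨hx, hfx⟩
    exact hi (fun i => x (π i)) ⟨fun i => hx (π i), hfx⟩

end ZeroCore

section CyclicLast

lemma exists_mem_add_one_notMem {m : ℕ} {A : Set (Fin (m + 1))} (hne : A.Nonempty)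
    (huniv : A ≠ Set.univ) : ∃ a ∈ A, a + 1 ∉ A := by
  by_contra! hstep
  obtain ⟨a, ha⟩ := hne
  refine huniv (Set.eq_univ_of_forall fun b => ?_)
  have hadd (c : Fin (m + 1)) : a + c ∈ A := by
    induction c using Fin.induction with
    | zero => simpa using ha
    | succ c ih => simpa only [← Fin.coeSucc_eq_succ, add_assoc] using hstep _ ih
  simpa using hadd (b - a)

open Classical in
/-- The last element of `A` in the cyclic order `0 → 1 → 2 → 0`, that is, the unique `a ∈ A` with
`a + 1 ∉ A`; where there is none (`A` is empty or everything), the default value `v`. -/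
noncomputable def cyclicLast (A : Set D3) (v : D3) : D3 :=
  if h : ∃ a ∈ A, a + 1 ∉ A then h.choose else v

variable {A : Set D3}

lemma cyclicLast_eq {a : D3} (ha : a ∈ A) (ha' : a + 1 ∉ A) (v : D3) : cyclicLast A v = a := by
  have h : ∃ a ∈ A, a + 1 ∉ A := ⟨a, ha, ha'⟩
  obtain ⟨hb, hb'⟩ := h.choose_spec
  rw [cyclicLast, dif_pos h]
  generalize h.choose = b at hb hb'
  have hcases (a b : D3) : b = a ∨ b = a + 1 ∨ a = b + 1 := by revert a b; decide
  rcases hcases a b with rfl | rfl | rfl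
  · rfl
  · exact absurd hb ha'
  · exact absurd ha hb'

lemma cyclicLast_image_add_one (A : Set D3) (v : D3) :
    cyclicLast ((· + 1) '' A) (v + 1) = cyclicLast A v + 1 := by
  have hmem (a : D3) : a + 1 ∈ (· + 1) '' A ↔ a ∈ A := (add_left_injective 1).mem_set_image
  by_cases h : ∃ a ∈ A, a + 1 ∉ A
  · obtain ⟨a, ha, ha'⟩ := h
    rw [cyclicLast_eq ha ha', cyclicLast_eq ((hmem a).2 ha) (mt (hmem (a + 1)).1 ha')]
  · have h' : ¬∃ a ∈ (· + 1) '' A, a + 1 ∉ (· + 1) '' A := by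
      simpa only [Set.exists_mem_image, hmem] using h
    rw [cyclicLast, cyclicLast, dif_neg h, dif_neg h']

lemma exists_forall_cyclicLast_eq (hne : A.Nonempty) (hA : A ⊆ Set.Iic 1) :
    ∃ a ∈ A, a + 1 ∉ A ∧ ∀ v, cyclicLast A v = a := by
  have huniv : A ≠ Set.univ := by
    rintro rfl
    exact absurd (hA (Set.mem_univ 2)) (by simp)
  obtain ⟨a, ha, ha'⟩ := exists_mem_add_one_notMem hne huniv
  exact ⟨a, ha, ha', cyclicLast_eq ha ha'⟩

lemma cyclicLast_le_one (hne : A.Nonempty) (hA : A ⊆ Set.Iic 1) (v : D3) :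
    cyclicLast A v ≤ 1 := by
  obtain ⟨a, ha, -, hlast⟩ := exists_forall_cyclicLast_eq hne hA
  exact (hlast v).trans_le (hA ha)

lemma cyclicLast_congr (hne : A.Nonempty) (hA : A ⊆ Set.Iic 1) (v w : D3) :
    cyclicLast A v = cyclicLast A w := by
  obtain ⟨a, -, -, hlast⟩ := exists_forall_cyclicLast_eq hne hA
  rw [hlast, hlast]

lemma eq_zero_of_cyclicLast_eq_zero (hA : A ⊆ Set.Iic 1) {v : D3} (h0 : cyclicLast A v = 0)
    {b : D3} (hb : b ∈ A) : b = 0 := by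
  obtain ⟨a, -, ha', hlast⟩ := exists_forall_cyclicLast_eq ⟨b, hb⟩ hA
  obtain rfl : a = 0 := (hlast v).symm.trans h0
  refine (eq_zero_or_eq_one_iff_le_one.2 (hA hb)).resolve_right ?_
  rintro rfl
  exact ha' hb

end CyclicLast

section CoreOp

variable {n : ℕ} {f : Op n}

/-- The image of `f` under the minor-preserving map from `Pol(C₃, R⇒₂)` to `Pol(C₃, R⁼₂)`. The value
`f y` enters only when `y` takes all three values on the zero core. -/
noncomputable def coreOp (f : Op n) : Op n := fun y => cyclicLast (y '' zeroCore f) (f y)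

lemma coreOp_minor (hC : Preserves f C3rel) (hR : Preserves f Rimp2rel) {r : ℕ}
    (π : Fin n → Fin r) : coreOp (minor f π) = minor (coreOp f) π := by
  funext y
  simp only [coreOp, zeroCore_minor hC hR, Set.image_image, minor]

lemma preserves_C3rel_coreOp (hC : Preserves f C3rel) : Preserves (coreOp f) C3rel := by
  refine preserves_C3rel_iff.2 fun y => ?_
  have himage : (y + 1) '' zeroCore f = (· + 1) '' (y '' zeroCore f) :=
    (Set.image_image (· + 1) y _).symm
  rw [coreOp, coreOp, preserves_C3rel_iff.1 hC, himage, cyclicLast_image_add_one]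

lemma preserves_Req2rel_coreOp (hC : Preserves f C3rel) (hR : Preserves f Rimp2rel) :
    Preserves (coreOp f) Req2rel := by
  have hne (y : Fin n → D3) : (y '' zeroCore f).Nonempty := (zeroCore_nonempty hC hR).image y
  refine preserves_Req2rel_iff.2 ⟨fun x hx => ?_, fun x hx hfx y z hyz => ?_⟩
  · exact cyclicLast_le_one (hne x) (Set.image_subset_iff.2 fun i _ => hx i) _
  · have hx0 : ∀ i ∈ zeroCore f, x i = 0 := fun i hi =>
      eq_zero_of_cyclicLast_eq_zero (Set.image_subset_iff.2 fun i _ => hx i) hfx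
        (Set.mem_image_of_mem x hi)
    have himage : y '' zeroCore f = z '' zeroCore f :=
      Set.image_congr fun i hi => (hyz i (hx0 i hi)).1
    have hy : y '' zeroCore f ⊆ Set.Iic 1 :=
      Set.image_subset_iff.2 fun i hi => (hyz i (hx0 i hi)).2
    refine ⟨?_, cyclicLast_le_one (hne y) hy _⟩
    rw [coreOp, coreOp, ← himage, cyclicLast_congr (hne y) hy]

end CoreOp

/-- `Pol({0,1,2}; C₃, R⇒₂)` and `Pol({0,1,2}; C₃, R⁼₂)` are minor equivalent. -/
theorem stmt3 :
    (∃ ξ, IsMinorHom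
      (Pol ({⟨2, C3rel⟩, ⟨3, Rimp2rel⟩} : Set (Σ k : ℕ, Set (Fin k → D3))))
      (Pol ({⟨2, C3rel⟩, ⟨3, Req2rel⟩} : Set (Σ k : ℕ, Set (Fin k → D3)))) ξ) ∧
    (∃ ξ, IsMinorHom
      (Pol ({⟨2, C3rel⟩, ⟨3, Req2rel⟩} : Set (Σ k : ℕ, Set (Fin k → D3))))
      (Pol ({⟨2, C3rel⟩, ⟨3, Rimp2rel⟩} : Set (Σ k : ℕ, Set (Fin k → D3)))) ξ) := by
  refine ⟨⟨fun _ f => coreOp f, fun n f hf => ?_, fun n r f π hf => ?_⟩,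
    ⟨fun _ f => f, fun n f hf => ?_, fun _ _ _ _ _ => rfl⟩⟩
  · obtain ⟨hC, hR⟩ := mem_Pol_pair.1 hf
    exact mem_Pol_pair.2 ⟨preserves_C3rel_coreOp hC, preserves_Req2rel_coreOp hC hR⟩
  · obtain ⟨hC, hR⟩ := mem_Pol_pair.1 hf
    exact coreOp_minor hC hR π
  · obtain ⟨hC, hE⟩ := mem_Pol_pair.1 hf
    exact mem_Pol_pair.2 ⟨hC, preserves_Rimp2rel_of_preserves_Req2rel hC hE⟩
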